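/- Let p₀,p₁,p₂,p₃ ∈ ℝ³ have all six pairwise distances in the interval [2, 2.51] (a quasi-regular tetrahedron), and suppose the circumradius of the simplex S = conv{p₀,p₁,p₂,p₃} is at most 1.41. Then Γ(S) ≤ 1 pt, where 1 pt = (4/3)·(3·arccos(1/3) − π) − δ_oct·(2√2/3) is the compression of the regular tetrahedron with edge length 2. -/

import Mathlib

open MeasureTheory Real

noncomputable section

abbrev E3 : Type := EuclideanSpace ℝ (Fin 3)

/-- The density of the regular octahedron. -/
def δoct : ℝ := (-3 * π + 12 * arccos (1 / Real.sqrt 3)) / Real.sqrt 8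

/-- The compression `Γ(S)` of the simplex `S = conv {p₀, p₁, p₂, p₃}`:
`Γ(S) = -δ_oct · vol S + vol (S ∩ (B(p₀,1) ∪ B(p₁,1) ∪ B(p₂,1) ∪ B(p₃,1)))`. -/
def Gamma (p₀ p₁ p₂ p₃ : E3) : ℝ :=
  -δoct * (volume (convexHull ℝ ({p₀, p₁, p₂, p₃} : Set E3))).toReal +
    (volume (convexHull ℝ ({p₀, p₁, p₂, p₃} : Set E3) ∩
      (Metric.closedBall p₀ 1 ∪ Metric.closedBall p₁ 1 ∪ Metric.closedBall p₂ 1 ∪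
        Metric.closedBall p₃ 1))).toReal

/-!
Let `D` be six times the volume of the simplex. The part of it inside the unit ball about a vertex
is at most a third of the solid angle `Ω` there, and `tan (Ω / 2) = D / A` (van Oosterom–Strackee),
where `A` is a polynomial in the edge lengths. The balls cover at most the sum of the four parts.
Bounding `arctan` by its tangent at `√2 / 5`, its argument for the regular tetrahedron, turns this
sum into an affine function of `D * ∑ 1 / A`. For quasi-regular tetrahedra `1 / A` is bounded by an
affine function of the edge lengths, and summing over the vertices leaves a negative multiple of the
excess `s` of the total edge length over that of the regular tetrahedron. In this way `Γ(S) - 1 pt`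
is at most `50 / 81` times `(1 / 5 - 27 / 100 * δoct) * (D - 4√2) - 0.00257 * s * D`. Hadamard's
inequality bounds the gain `D - 4√2` by a small multiple of `s * D`, and `√2 / 2 ≤ δoct ≤ 20 / 27`
is all that is needed of `δoct` to conclude.
-/

open Set Metric InnerProductGeometry
open scoped ENNReal RealInnerProductSpace Matrix

/-! ### Solid angles of lunes and trihedral cones -/

/-- The solid angle at the origin: the solid angle of a cone `C` with apex `0`, i.e. the area of its
trace on the unit sphere, is three times the volume of its trace on the unit ball. -/
def solidAngle : Measure E3 := (3 : ℝ≥0∞) • volume.restrict (closedBall 0 1)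

lemma solidAngle_apply (s : Set E3) : solidAngle s = 3 * volume (s ∩ closedBall 0 1) := by
  rw [solidAngle, Measure.smul_apply, Measure.restrict_apply' measurableSet_closedBall, smul_eq_mul]

lemma solidAngle_univ : solidAngle univ = ENNReal.ofReal (4 * π) := by
  rw [solidAngle_apply, univ_inter, EuclideanSpace.volume_closedBall_fin_three,
    ENNReal.ofReal_one, one_pow, one_mul, ← ENNReal.ofReal_ofNat,
    ← ENNReal.ofReal_mul (by norm_num)]
  congr 1
  ring

instance : IsFiniteMeasure solidAngle := ⟨solidAngle_univ ▸ ENNReal.ofReal_lt_top⟩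

lemma solidAngle_real_univ : solidAngle.real univ = 4 * π := by
  rw [measureReal_def, solidAngle_univ, ENNReal.toReal_ofReal (by positivity)]

lemma solidAngle_real_apply (s : Set E3) :
    solidAngle.real s = 3 * volume.real (s ∩ closedBall 0 1) := by
  simp only [measureReal_def, solidAngle_apply, ENNReal.toReal_mul, ENNReal.toReal_ofNat]

lemma measurePreserving_solidAngle (f : E3 ≃ₗᵢ[ℝ] E3) :
    MeasurePreserving f solidAngle solidAngle := by
  have h := f.measurePreserving.restrict_preimage (measurableSet_closedBall (x := 0) (ε := 1))
  rw [f.preimage_closedBall, map_zero] at h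
  exact h.smul_measure 3

lemma solidAngle_real_preimage (f : E3 ≃ₗᵢ[ℝ] E3) {s : Set E3} (hs : MeasurableSet s) :
    solidAngle.real (f ⁻¹' s) = solidAngle.real s := by
  simp only [measureReal_def,
    (measurePreserving_solidAngle f).measure_preimage hs.nullMeasurableSet]

lemma volume_setOf_inner_eq_zero {E : Type*} [NormedAddCommGroup E] [InnerProductSpace ℝ E]
    [FiniteDimensional ℝ E] [MeasurableSpace E] [BorelSpace E] {a : E} (ha : a ≠ 0) :
    volume {x : E | ⟪a, x⟫ = 0} = 0 := by
  refine Measure.addHaar_submodule volume (innerₛₗ ℝ a).ker fun htop => ha ?_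
  have hmem : a ∈ (innerₛₗ ℝ a).ker := htop ▸ Submodule.mem_top
  exact inner_self_eq_zero.1 (LinearMap.mem_ker.1 hmem)

lemma lintegral_sector {g : ℝ → ℝ≥0∞} (hg : Measurable g) {P : Set (ℝ × ℝ)} (hP : MeasurableSet P)
    (hcone : ∀ r : ℝ, 0 < r → ∀ p, r • p ∈ P ↔ p ∈ P) :
    ∫⁻ p in P, g (p.1 ^ 2 + p.2 ^ 2) =
      (∫⁻ r in Ioi 0, ENNReal.ofReal r * g (r ^ 2)) *
        volume ({t | (cos t, sin t) ∈ P} ∩ Ioo (-π) π) := by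
  have hT : MeasurableSet {t | (cos t, sin t) ∈ P} := hP.preimage (by fun_prop)
  have hpolar : ∀ p ∈ polarCoord.target, ENNReal.ofReal p.1 •
      P.indicator (fun p => g (p.1 ^ 2 + p.2 ^ 2)) (polarCoord.symm p) =
        (ENNReal.ofReal p.1 * g (p.1 ^ 2)) * {t | (cos t, sin t) ∈ P}.indicator 1 p.2 := by
    rintro ⟨r, t⟩ ⟨hr, -⟩
    have hmem : (r * cos t, r * sin t) ∈ P ↔ (cos t, sin t) ∈ P := hcone r hr (cos t, sin t)
    have hsq : (r * cos t) ^ 2 + (r * sin t) ^ 2 = r ^ 2 := by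
      linear_combination r ^ 2 * sin_sq_add_cos_sq t
    by_cases h : (cos t, sin t) ∈ P <;> simp [hmem, h, hsq]
  rw [← lintegral_indicator hP, ← lintegral_comp_polarCoord_symm,
    setLIntegral_congr_fun polarCoord.open_target.measurableSet hpolar, polarCoord_target,
    Measure.volume_eq_prod, ← Measure.prod_restrict,
    lintegral_prod_mul (f := fun r => ENNReal.ofReal r * g (r ^ 2)) (by fun_prop)
      (measurable_one.indicator hT).aemeasurable,
    lintegral_indicator_one hT, Measure.restrict_apply hT]

lemma volume_preserving_zxy :
    MeasurePreserving fun x : E3 => (x 2, (x 0, x 1)) :=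
  ((MeasurePreserving.id volume).prod (volume_preserving_finTwoArrow ℝ)).comp
    ((volume_preserving_piFinSuccAbove (fun _ : Fin 3 => ℝ) 2).comp
      (PiLp.volume_preserving_ofLp (Fin 3)))

lemma exists_solidAngle_sector_eq_const_mul : ∃ c : ℝ≥0∞, ∀ P : Set (ℝ × ℝ), MeasurableSet P →
    (∀ r : ℝ, 0 < r → ∀ p, r • p ∈ P ↔ p ∈ P) →
      solidAngle {x | (x 0, x 1) ∈ P} = c * volume ({t | (cos t, sin t) ∈ P} ∩ Ioo (-π) π) := by
  let slice (z s : ℝ) : ℝ≥0∞ := {s | s + z ^ 2 ≤ 1}.indicator 1 s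
  have slice_meas (z : ℝ) : Measurable (slice z) :=
    measurable_one.indicator (measurableSet_le (by fun_prop) (by fun_prop))
  refine ⟨3 * ∫⁻ z, ∫⁻ r in Ioi 0, ENNReal.ofReal r * slice z (r ^ 2), fun P hP hcone => ?_⟩
  set S : Set (ℝ × ℝ × ℝ) := {q | q.2 ∈ P ∧ q.2.1 ^ 2 + q.2.2 ^ 2 + q.1 ^ 2 ≤ 1}
  have hS : MeasurableSet S :=
    (hP.preimage measurable_snd).inter
      (measurableSet_le (f := fun q : ℝ × ℝ × ℝ => q.2.1 ^ 2 + q.2.2 ^ 2 + q.1 ^ 2)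
        (by fun_prop) measurable_const)
  have hball : {x : E3 | (x 0, x 1) ∈ P} ∩ closedBall 0 1 =
      (fun x : E3 => (x 2, (x 0, x 1))) ⁻¹' S := by
    ext x
    simp [S, EuclideanSpace.norm_eq, Fin.sum_univ_three]
  rw [solidAngle_apply, mul_assoc, hball,
    volume_preserving_zxy.measure_preimage hS.nullMeasurableSet, Measure.volume_eq_prod,
    Measure.prod_apply hS,
    ← lintegral_mul_const' _ _ (measure_ne_top_of_subset inter_subset_right (by simp))]
  congr 2
  ext z
  rw [← lintegral_sector (slice_meas z) hP hcone, ← lintegral_indicator hP,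
    ← lintegral_indicator_one (hS.preimage measurable_prodMk_left)]
  congr 1
  ext p
  by_cases hp : p ∈ P <;> simp [S, slice, indicator, hp]

-- Evaluating the constant directly is unnecessary: the whole space is a sector of angle `2 * π`.
lemma solidAngle_sector {P : Set (ℝ × ℝ)} (hP : MeasurableSet P)
    (hcone : ∀ r : ℝ, 0 < r → ∀ p, r • p ∈ P ↔ p ∈ P) :
    solidAngle {x | (x 0, x 1) ∈ P} = 2 * volume ({t | (cos t, sin t) ∈ P} ∩ Ioo (-π) π) := by
  obtain ⟨c, hc⟩ := exists_solidAngle_sector_eq_const_mul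
  have htotal := hc univ MeasurableSet.univ (by simp)
  simp only [mem_univ, ofPred_true, univ_inter, volume_Ioo, solidAngle_univ] at htotal
  have hc2 : c = 2 := by
    have h4π : ENNReal.ofReal (4 * π) = 2 * ENNReal.ofReal (π - -π) := by
      rw [← ENNReal.ofReal_ofNat, ← ENNReal.ofReal_mul (by norm_num)]
      congr 1
      ring
    rw [h4π] at htotal
    exact ((ENNReal.mul_left_inj (by simp [pi_pos]) ENNReal.ofReal_ne_top).1 htotal).symm
  rw [hc P hP hcone, hc2]

lemma cos_pos_iff_abs_lt_pi_div_two {t : ℝ} (ht : |t| ≤ 3 * π / 2) : 0 < cos t ↔ |t| < π / 2 := by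
  refine ⟨fun h => ?_, fun h => cos_pos_of_mem_Ioo (abs_lt.1 h)⟩
  by_contra! hle
  exact h.not_ge (cos_abs t ▸ cos_nonpos_of_pi_div_two_le_of_le hle (by linarith))

lemma volume_setOf_cos_pos_and_cos_sub_pos {φ : ℝ} (hφ : |φ| ≤ π) :
    volume ({t | 0 < cos t ∧ 0 < cos (t - φ)} ∩ Ioo (-π) π) = ENNReal.ofReal (π - |φ|) := by
  have hset : {t | 0 < cos t ∧ 0 < cos (t - φ)} ∩ Ioo (-π) π =
      Ioo (max (-(π / 2)) (φ - π / 2)) (min (π / 2) (φ + π / 2)) := by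
    ext t
    have hcos (ht : t ∈ Ioo (-π) π) : 0 < cos t ↔ |t| < π / 2 :=
      cos_pos_iff_abs_lt_pi_div_two ((abs_lt.2 ht).le.trans (by linarith [pi_pos]))
    have hcos_sub (ht : |t| < π / 2) : 0 < cos (t - φ) ↔ |t - φ| < π / 2 :=
      cos_pos_iff_abs_lt_pi_div_two ((abs_sub t φ).trans (by linarith))
    simp only [mem_inter_iff, mem_ofPred_eq, mem_Ioo, max_lt_iff, lt_min_iff]
    constructor
    · rintro ⟨⟨ht, htφ⟩, htπ⟩
      rw [hcos htπ] at ht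
      rw [hcos_sub ht, abs_lt] at htφ
      rw [abs_lt] at ht
      refine ⟨⟨ht.1, ?_⟩, ht.2, ?_⟩ <;> linarith
    · rintro ⟨⟨htl, htφl⟩, htr, htφr⟩
      have htπ : t ∈ Ioo (-π) π := ⟨by linarith, by linarith⟩
      have ht : |t| < π / 2 := abs_lt.2 ⟨htl, htr⟩
      exact ⟨⟨(hcos htπ).2 ht, (hcos_sub ht).2 (abs_lt.2 ⟨by linarith, by linarith⟩)⟩, htπ⟩
  rw [hset, volume_Ioo]
  congr 1
  rcases le_total 0 φ with h | h
  · rw [abs_of_nonneg h, max_eq_right (by linarith), min_eq_left (by linarith)]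
    ring
  · rw [abs_of_nonpos h, max_eq_left (by linarith), min_eq_right (by linarith)]
    ring

lemma inner_eq_sum_three (u v : E3) : ⟪u, v⟫ = u 0 * v 0 + u 1 * v 1 + u 2 * v 2 := by
  simp [PiLp.inner_apply, Fin.sum_univ_three, mul_comm]

lemma exists_orthonormalBasis_repr_eq {a : E3} (ha : a ≠ 0) (b : E3) :
    ∃ B : OrthonormalBasis (Fin 3) ℝ E3, B.repr a = ‖a‖ • !₂[1, 0, 0] ∧ B.repr b 2 = 0 := by
  have hfr : Module.finrank ℝ E3 = Fintype.card (Fin 3) := by simp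
  set B := InnerProductSpace.gramSchmidtOrthonormalBasis hfr ![a, b, 0]
  have htri {i j : Fin 3} (hij : i < j) : B.repr (![a, b, 0] i) j = 0 :=
    InnerProductSpace.gramSchmidtOrthonormalBasis_inv_triangular' hfr ![a, b, 0] hij
  have hfirst : InnerProductSpace.gramSchmidtNormed ℝ ![a, b, 0] 0 = ‖a‖⁻¹ • a := by
    have hbot : InnerProductSpace.gramSchmidt ℝ ![a, b, 0] 0 = a :=
      InnerProductSpace.gramSchmidt_bot ℝ _
    simp [InnerProductSpace.gramSchmidtNormed, hbot]
  have hB0 : B 0 = ‖a‖⁻¹ • a := by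
    rw [InnerProductSpace.gramSchmidtOrthonormalBasis_apply hfr (by simp [hfirst, ha]), hfirst]
  have hrepr0 : B.repr a 0 = ‖a‖ := by
    rw [B.repr_apply_apply, hB0, real_inner_smul_left, real_inner_self_eq_norm_sq, sq,
      inv_mul_cancel_left₀ (norm_ne_zero_iff.2 ha)]
  refine ⟨B, ?_, htri (i := 1) (j := 2) (by decide)⟩
  ext i
  fin_cases i
  · simpa using hrepr0
  · simpa using htri (i := 0) (j := 1) (by decide)
  · simpa using htri (i := 0) (j := 2) (by decide)

lemma exists_linearIsometryEquiv_eq_smul_cos_sin {a b : E3} (ha : a ≠ 0) (hb : b ≠ 0) :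
    ∃ (f : E3 ≃ₗᵢ[ℝ] E3) (ψ : ℝ), |ψ| = angle a b ∧
      f a = ‖a‖ • !₂[1, 0, 0] ∧ f b = ‖b‖ • !₂[cos ψ, sin ψ, 0] := by
  obtain ⟨B, hBa, hBb⟩ := exists_orthonormalBasis_repr_eq ha b
  set z : ℂ := ⟨B.repr b 0, B.repr b 1⟩
  have hz : ‖z‖ = ‖b‖ := by
    rw [← B.repr.norm_map b, EuclideanSpace.norm_eq, Complex.norm_eq_sqrt_sq_add_sq]
    simp [Fin.sum_univ_three, hBb, z]
  have hfb : B.repr b = ‖b‖ • !₂[cos z.arg, sin z.arg, 0] := by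
    rw [← hz]
    ext i
    fin_cases i
    · simp [Complex.norm_mul_cos_arg, z]
    · simp [Complex.norm_mul_sin_arg, z]
    · simpa using hBb
  refine ⟨B.repr, z.arg, ?_, hBa, hfb⟩
  rw [← B.repr.toLinearIsometry.angle_map, LinearIsometryEquiv.coe_toLinearIsometry, hBa, hfb,
    angle_smul_left_of_pos _ _ (norm_pos_iff.2 ha),
    angle_smul_right_of_pos _ _ (norm_pos_iff.2 hb), angle,
    ← arccos_cos (abs_nonneg _) (Complex.abs_arg_le_pi z)]
  simp [inner_eq_sum_three, EuclideanSpace.norm_eq, Fin.sum_univ_three]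

/-- The open half-space with inner normal `a`. -/
def halfSpace (a : E3) : Set E3 := {x | 0 < ⟪a, x⟫}

lemma measurableSet_halfSpace (a : E3) : MeasurableSet (halfSpace a) :=
  measurableSet_lt (by fun_prop) (by fun_prop)

lemma solidAngle_real_lune {a b : E3} (ha : a ≠ 0) (hb : b ≠ 0) :
    solidAngle.real (halfSpace a ∩ halfSpace b) = 2 * (π - angle a b) := by
  obtain ⟨f, ψ, hψ, hfa, hfb⟩ := exists_linearIsometryEquiv_eq_smul_cos_sin ha hb
  have hψπ : |ψ| ≤ π := hψ.trans_le (angle_le_pi a b)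
  set P : Set (ℝ × ℝ) := {p | 0 < p.1 ∧ 0 < cos ψ * p.1 + sin ψ * p.2} with hPdef
  have hP : MeasurableSet P :=
    (measurableSet_lt measurable_const measurable_fst).inter
      (measurableSet_lt measurable_const (g := fun p : ℝ × ℝ => cos ψ * p.1 + sin ψ * p.2)
        (by fun_prop))
  have hcyl : MeasurableSet {x : E3 | (x 0, x 1) ∈ P} :=
    hP.preimage (f := fun x : E3 => (x 0, x 1)) (by fun_prop)
  have hcone (r : ℝ) (hr : 0 < r) (p : ℝ × ℝ) : r • p ∈ P ↔ p ∈ P := by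
    simp only [hPdef, mem_ofPred_eq, Prod.smul_fst, Prod.smul_snd, smul_eq_mul, mul_left_comm _ r,
      ← mul_add, mul_pos_iff_of_pos_left hr]
  have harc : {t | (cos t, sin t) ∈ P} = {t | 0 < cos t ∧ 0 < cos (t - ψ)} := by
    ext t
    simp only [hPdef, mem_ofPred_eq, cos_sub, mul_comm]
  have hpre : halfSpace a ∩ halfSpace b = f ⁻¹' {x | (x 0, x 1) ∈ P} := by
    ext x
    have hax : ⟪a, x⟫ = ‖a‖ * f x 0 := by
      rw [← f.inner_map_map, hfa]
      simp [inner_eq_sum_three]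
    have hbx : ⟪b, x⟫ = ‖b‖ * (cos ψ * f x 0 + sin ψ * f x 1) := by
      rw [← f.inner_map_map, hfb]
      simp only [inner_eq_sum_three, PiLp.smul_apply, smul_eq_mul, Matrix.cons_val,
        mul_zero, zero_mul, add_zero]
      ring
    simp only [halfSpace, mem_inter_iff, mem_preimage, hPdef, mem_ofPred_eq, hax, hbx,
      mul_pos_iff_of_pos_left (norm_pos_iff.2 ha), mul_pos_iff_of_pos_left (norm_pos_iff.2 hb)]
  rw [hpre, solidAngle_real_preimage f hcyl, measureReal_def,
    solidAngle_sector hP hcone, harc, volume_setOf_cos_pos_and_cos_sub_pos hψπ, hψ,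
    ENNReal.toReal_mul, ENNReal.toReal_ofNat,
    ENNReal.toReal_ofReal (sub_nonneg.2 (angle_le_pi a b))]

lemma solidAngle_real_halfSpace {a : E3} (ha : a ≠ 0) : solidAngle.real (halfSpace a) = 2 * π := by
  rw [← inter_self (halfSpace a), solidAngle_real_lune ha ha, angle_self ha, sub_zero]

lemma ae_solidAngle_inner_ne_zero {a : E3} (ha : a ≠ 0) : ∀ᵐ x ∂solidAngle, ⟪a, x⟫ ≠ 0 := by
  refine ae_iff.2 ?_
  simp only [not_not, solidAngle_apply]
  rw [measure_inter_null_of_null_left _ (volume_setOf_inner_eq_zero ha), mul_zero]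

lemma compl_union_halfSpace_ae_eq {a b c : E3} (ha : a ≠ 0) (hb : b ≠ 0) (hc : c ≠ 0) :
    ((halfSpace a ∪ halfSpace b ∪ halfSpace c)ᶜ : Set E3) =ᵐ[solidAngle]
      (LinearIsometryEquiv.neg ℝ ⁻¹' (halfSpace a ∩ halfSpace b ∩ halfSpace c) : Set E3) := by
  refine Filter.eventuallyEq_set.2 ?_
  filter_upwards [ae_solidAngle_inner_ne_zero ha, ae_solidAngle_inner_ne_zero hb,
    ae_solidAngle_inner_ne_zero hc] with x hax hbx hcx
  simp only [halfSpace, mem_compl_iff, mem_union, mem_preimage, mem_inter_iff, mem_ofPred_eq,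
    LinearIsometryEquiv.coe_neg, inner_neg_right, Left.neg_pos_iff, not_or, not_lt, hax.le_iff_lt,
    hbx.le_iff_lt, hcx.le_iff_lt]

-- Girard's theorem: by central symmetry the complement of the union of the three half-spaces has
-- the same solid angle as their intersection, and inclusion–exclusion expresses it through lunes.
lemma solidAngle_real_inter_halfSpace {a b c : E3} (ha : a ≠ 0) (hb : b ≠ 0) (hc : c ≠ 0) :
    solidAngle.real (halfSpace a ∩ halfSpace b ∩ halfSpace c) =
      2 * π - angle a b - angle b c - angle a c := by
  have hm := measurableSet_halfSpace
  have hab := measureReal_union_add_inter (μ := solidAngle) (s := halfSpace a) (hm b)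
  have habc := measureReal_union_add_inter (μ := solidAngle) (s := halfSpace a ∪ halfSpace b) (hm c)
  have hacbc := measureReal_union_add_inter (μ := solidAngle) (s := halfSpace a ∩ halfSpace c)
    ((hm b).inter (hm c))
  rw [← union_inter_distrib_right, ← inter_inter_distrib_right] at hacbc
  have hcompl := measureReal_compl (μ := solidAngle) (((hm a).union (hm b)).union (hm c))
  rw [measureReal_congr (compl_union_halfSpace_ae_eq ha hb hc),
    solidAngle_real_preimage _ (((hm a).inter (hm b)).inter (hm c)), solidAngle_real_univ] at hcompl
  simp only [solidAngle_real_lune, solidAngle_real_halfSpace, ne_eq, ha, hb, hc,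
    not_false_eq_true] at hab habc hacbc hcompl
  linarith

/-- The cross product of vectors of `E3`. -/
def cross (u v : E3) : E3 := WithLp.toLp 2 (u.ofLp ⨯₃ v.ofLp)

/-- The triple product of vectors of `E3`, i.e. the determinant of the matrix with rows `u`, `v`
and `w`. -/
def tripleProduct (u v w : E3) : ℝ := ⟪u, cross v w⟫

lemma cross_apply_zero (u v : E3) : cross u v 0 = u 1 * v 2 - u 2 * v 1 := by
  simp [cross, cross_apply]

lemma cross_apply_one (u v : E3) : cross u v 1 = u 2 * v 0 - u 0 * v 2 := by
  simp [cross, cross_apply]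

lemma cross_apply_two (u v : E3) : cross u v 2 = u 0 * v 1 - u 1 * v 0 := by
  simp [cross, cross_apply]

lemma inner_cross_cross (u v w x : E3) :
    ⟪cross u v, cross w x⟫ = ⟪u, w⟫ * ⟪v, x⟫ - ⟪u, x⟫ * ⟪v, w⟫ := by
  simp only [inner_eq_sum_three, cross_apply_zero, cross_apply_one, cross_apply_two]
  ring

lemma tripleProduct_rotate (u v w : E3) : tripleProduct v w u = tripleProduct u v w := by
  simp only [tripleProduct, inner_eq_sum_three, cross_apply_zero, cross_apply_one, cross_apply_two]
  ring

lemma tripleProduct_swap (u v w : E3) : tripleProduct u w v = -tripleProduct u v w := by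
  simp only [tripleProduct, inner_eq_sum_three, cross_apply_zero, cross_apply_one, cross_apply_two]
  ring

lemma cross_cross_cross (u v w : E3) :
    cross (cross w u) (cross u v) = tripleProduct u v w • u := by
  ext i
  fin_cases i <;>
    simp only [Fin.zero_eta, Fin.mk_one, Fin.reduceFinMk, PiLp.smul_apply, smul_eq_mul,
      tripleProduct, inner_eq_sum_three, cross_apply_zero, cross_apply_one, cross_apply_two] <;>
    ring

lemma tripleProduct_sq (u v w : E3) :
    tripleProduct u v w ^ 2 = ‖u‖ ^ 2 * ‖v‖ ^ 2 * ‖w‖ ^ 2 + 2 * ⟪v, w⟫ * ⟪w, u⟫ * ⟪u, v⟫ -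
      ‖u‖ ^ 2 * ⟪v, w⟫ ^ 2 - ‖v‖ ^ 2 * ⟪w, u⟫ ^ 2 - ‖w‖ ^ 2 * ⟪u, v⟫ ^ 2 := by
  simp only [← real_inner_self_eq_norm_sq, tripleProduct, inner_eq_sum_three, cross_apply_zero,
    cross_apply_one, cross_apply_two]
  ring

lemma cross_ne_zero_of_tripleProduct_ne_zero {u v w : E3} (h : tripleProduct u v w ≠ 0) :
    cross v w ≠ 0 :=
  fun hvw => h (by rw [tripleProduct, hvw, inner_zero_right])

lemma angle_eq_arg_inner_norm_cross {x y : E3} (hx : x ≠ 0) (hy : y ≠ 0) :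
    angle x y = Complex.arg ⟨⟪x, y⟫, ‖cross x y‖⟩ := by
  have hpos : 0 < ‖x‖ * ‖y‖ := mul_pos (norm_pos_iff.2 hx) (norm_pos_iff.2 hy)
  have hz : (⟨⟪x, y⟫, ‖cross x y‖⟩ : ℂ) = (‖x‖ * ‖y‖ : ℝ) *
      (Complex.cos (angle x y) + Complex.sin (angle x y) * Complex.I) := by
    rw [cross, norm_ofLp_crossProduct, ← cos_angle_mul_norm_mul_norm, mul_comm (cos _),
      Complex.mk_eq_add_mul_I]
    push_cast
    ring
  rw [hz, Complex.arg_mul_cos_add_sin_mul_I hpos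
    ⟨by linarith [angle_nonneg x y, pi_pos], angle_le_pi x y⟩]

lemma ne_zero_of_tripleProduct_ne_zero {u v w : E3} (h : tripleProduct u v w ≠ 0) : u ≠ 0 :=
  fun hu => h (by rw [tripleProduct, hu, inner_zero_left])

/-- A complex number whose argument is the exterior dihedral angle of the trihedral cone spanned by
`u`, `v`, `w` along the edge `u`. -/
def dihedralPhase (u v w : E3) : ℂ := ⟨⟪cross w u, cross u v⟫, tripleProduct u v w * ‖u‖⟩

lemma dihedralPhase_ne_zero {u v w : E3} (hD : 0 < tripleProduct u v w) :
    dihedralPhase u v w ≠ 0 := fun h =>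
  mul_ne_zero hD.ne' (norm_ne_zero_iff.2 (ne_zero_of_tripleProduct_ne_zero hD.ne'))
    (congrArg Complex.im h)

lemma angle_cross_cross_eq_arg_dihedralPhase {u v w : E3} (hD : 0 < tripleProduct u v w) :
    angle (cross w u) (cross u v) = (dihedralPhase u v w).arg := by
  have hwu : cross w u ≠ 0 :=
    cross_ne_zero_of_tripleProduct_ne_zero (u := v) (by rw [tripleProduct_rotate]; exact hD.ne')
  have huv : cross u v ≠ 0 :=
    cross_ne_zero_of_tripleProduct_ne_zero (u := w) (by rw [← tripleProduct_rotate]; exact hD.ne')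
  rw [angle_eq_arg_inner_norm_cross hwu huv, cross_cross_cross, norm_smul,
    Real.norm_of_nonneg hD.le, dihedralPhase]

/-- The denominator in the van Oosterom–Strackee formula
`tan (Ω / 2) = |tripleProduct u v w| / solidAngleDenom u v w` for the solid angle `Ω` of the
trihedral cone spanned by `u`, `v` and `w`. -/
def solidAngleDenom (u v w : E3) : ℝ :=
  ‖u‖ * ‖v‖ * ‖w‖ + ‖u‖ * ⟪v, w⟫ + ‖v‖ * ⟪w, u⟫ + ‖w‖ * ⟪u, v⟫

/-- The interior of the cone spanned by a positively oriented basis `u`, `v`, `w`, as the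
intersection of the half-spaces bounded by its facets. -/
def trihedralCone (u v w : E3) : Set E3 :=
  halfSpace (cross v w) ∩ halfSpace (cross w u) ∩ halfSpace (cross u v)

lemma dihedralPhase_mul_mul (u v w : E3) :
    dihedralPhase u v w * dihedralPhase v w u * dihedralPhase w u v =
      ((‖v‖ * ‖w‖ - ⟪v, w⟫) * (‖w‖ * ‖u‖ - ⟪w, u⟫) * (‖u‖ * ‖v‖ - ⟪u, v⟫) / 2 : ℝ) *
        (starRingEnd ℂ) ⟨solidAngleDenom u v w, tripleProduct u v w⟩ ^ 2 := by
  have hD := tripleProduct_sq u v w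
  simp only [dihedralPhase, tripleProduct_rotate u v w, ← tripleProduct_rotate w u v,
    inner_cross_cross, real_inner_self_eq_norm_sq, real_inner_comm u v,
    real_inner_comm v w, real_inner_comm w u, solidAngleDenom]
  set a := ‖u‖
  set b := ‖v‖
  set c := ‖w‖
  set p := ⟪v, w⟫
  set q := ⟪w, u⟫
  set r := ⟪u, v⟫
  set D := tripleProduct u v w
  apply Complex.ext
  · simp only [sq, Complex.mul_re, Complex.mul_im, Complex.conj_re, Complex.conj_im,
      Complex.ofReal_re, Complex.ofReal_im]
    linear_combination (b * c * (p * a ^ 2 - q * r) + a * c * (q * b ^ 2 - r * p) +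
      a * b * (r * c ^ 2 - p * q) + (b * c - p) * (c * a - q) * (a * b - r) / 2) * hD
  · simp only [sq, Complex.mul_re, Complex.mul_im, Complex.conj_re, Complex.conj_im,
      Complex.ofReal_re, Complex.ofReal_im]
    linear_combination -a * b * c * D * hD

lemma solidAngle_real_trihedralCone_coe {u v w : E3} (hD : 0 < tripleProduct u v w) :
    (solidAngle.real (trihedralCone u v w) : Angle) =
      (2 * Complex.arg ⟨solidAngleDenom u v w, tripleProduct u v w⟩ : ℝ) := by
  have hDv : 0 < tripleProduct v w u := by rwa [tripleProduct_rotate]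
  have hDw : 0 < tripleProduct w u v := by rwa [← tripleProduct_rotate]
  have hu := dihedralPhase_ne_zero hD
  have hv := dihedralPhase_ne_zero hDv
  have hw := dihedralPhase_ne_zero hDw
  set ζ : ℂ := ⟨solidAngleDenom u v w, tripleProduct u v w⟩
  set K := (‖v‖ * ‖w‖ - ⟪v, w⟫) * (‖w‖ * ‖u‖ - ⟪w, u⟫) * (‖u‖ * ‖v‖ - ⟪u, v⟫) / 2
  have hmul : dihedralPhase u v w * dihedralPhase v w u * dihedralPhase w u v =
      K * (starRingEnd ℂ) ζ ^ 2 := dihedralPhase_mul_mul u v w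
  have hK : 0 < K := by
    have hK0 : K ≠ 0 := fun hK0 => mul_ne_zero (mul_ne_zero hu hv) hw (by simp [hmul, hK0])
    have hcs (x y : E3) : 0 ≤ ‖x‖ * ‖y‖ - ⟪x, y⟫ := sub_nonneg.2 (real_inner_le_norm x y)
    have hK' : 0 ≤ K :=
      div_nonneg (mul_nonneg (mul_nonneg (hcs v w) (hcs w u)) (hcs u v)) zero_le_two
    exact hK'.lt_of_ne' hK0
  calc (solidAngle.real (trihedralCone u v w) : Angle)
      = -((dihedralPhase u v w).arg + (dihedralPhase v w u).arg + (dihedralPhase w u v).arg) := by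
        rw [trihedralCone, solidAngle_real_inter_halfSpace
          (cross_ne_zero_of_tripleProduct_ne_zero hD.ne')
          (cross_ne_zero_of_tripleProduct_ne_zero hDv.ne')
          (cross_ne_zero_of_tripleProduct_ne_zero hDw.ne'), angle_comm (cross v w) (cross u v),
          angle_cross_cross_eq_arg_dihedralPhase hD, angle_cross_cross_eq_arg_dihedralPhase hDv,
          angle_cross_cross_eq_arg_dihedralPhase hDw]
        simp only [Angle.coe_sub, Angle.coe_two_pi]
        abel
    _ = -((K * (starRingEnd ℂ) ζ ^ 2).arg : Angle) := by
        rw [← hmul, Complex.arg_mul_coe_angle (mul_ne_zero hu hv) hw,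
          Complex.arg_mul_coe_angle hu hv]
    _ = (2 * ζ.arg : ℝ) := by
        rw [Complex.arg_real_mul _ hK, Complex.arg_pow_coe_angle, Complex.arg_conj_coe_angle,
          smul_neg, neg_neg, two_nsmul, two_mul, Angle.coe_add]

lemma solidAngle_real_trihedralCone {u v w : E3} (hD : 0 < tripleProduct u v w) :
    solidAngle.real (trihedralCone u v w) =
      2 * Complex.arg ⟨solidAngleDenom u v w, tripleProduct u v w⟩ := by
  set θ := Complex.arg ⟨solidAngleDenom u v w, tripleProduct u v w⟩
  have hθ0 : 0 < θ :=
    (Complex.arg_nonneg_iff.2 hD.le).lt_of_ne' fun h => hD.ne' (Complex.arg_eq_zero_iff.1 h).2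
  have hθπ : θ < π := Complex.arg_lt_pi_iff.2 (Or.inr hD.ne')
  have hle : solidAngle.real (trihedralCone u v w) ≤ 2 * π :=
    (measureReal_mono (inter_subset_left.trans inter_subset_left)).trans_eq
      (solidAngle_real_halfSpace (cross_ne_zero_of_tripleProduct_ne_zero hD.ne'))
  obtain ⟨k, hk⟩ :=
    Angle.angle_eq_iff_two_pi_dvd_sub.1 (solidAngle_real_trihedralCone_coe hD)
  have hnonneg : 0 ≤ solidAngle.real (trihedralCone u v w) := measureReal_nonneg
  have hk0 : k = 0 := by
    refine Int.abs_lt_one_iff.1 ?_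
    have : |(k : ℝ)| < 1 := abs_lt.2 ⟨by nlinarith [pi_pos], by nlinarith [pi_pos]⟩
    exact_mod_cast this
  rw [hk0, Int.cast_zero, mul_zero, sub_eq_zero] at hk
  exact hk

lemma arg_eq_arctan {z : ℂ} (hz : 0 < z.re) : z.arg = arctan (z.im / z.re) := by
  have h := abs_lt.1 (Complex.abs_arg_lt_pi_div_two_iff.2 (Or.inl hz))
  rw [← Complex.tan_arg, arctan_tan h.1 h.2]

/-! ### The volume of a simplex and of its trace on a ball -/

open scoped Nat in
lemma lintegral_Icc_sub_pow_div_factorial (n : ℕ) {t : ℝ} (ht : 0 ≤ t) :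
    ∫⁻ a in Icc 0 t, ENNReal.ofReal ((t - a) ^ n / n !) =
      ENNReal.ofReal (t ^ (n + 1) / (n + 1)!) := by
  have hint : IntegrableOn (fun a : ℝ => (t - a) ^ n / n !) (Icc 0 t) :=
    Continuous.integrableOn_Icc (by fun_prop)
  have hnonneg : ∀ a ∈ Icc 0 t, 0 ≤ (t - a) ^ n / n ! := fun a ha =>
    div_nonneg (pow_nonneg (sub_nonneg.2 ha.2) n) (Nat.cast_nonneg _)
  rw [← ofReal_integral_eq_lintegral_ofReal hint
      (ae_restrict_of_forall_mem measurableSet_Icc hnonneg),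
    integral_Icc_eq_integral_Ioc, ← intervalIntegral.integral_of_le ht,
    intervalIntegral.integral_div, intervalIntegral.integral_comp_sub_left (fun x => x ^ n),
    sub_self, sub_zero, integral_pow, zero_pow n.succ_ne_zero, sub_zero, div_div,
    Nat.factorial_succ, Nat.cast_mul, Nat.cast_succ]

open scoped Nat in
lemma volume_setOf_nonneg_sum_le (n : ℕ) {t : ℝ} (ht : 0 ≤ t) :
    volume {x : Fin n → ℝ | 0 ≤ x ∧ ∑ i, x i ≤ t} = ENNReal.ofReal (t ^ n / n !) := by
  induction n generalizing t with
  | zero => simp [ht, volume_pi]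
  | succ n ih =>
    set S : Set (ℝ × (Fin n → ℝ)) := {p | (0 ≤ p.1 ∧ 0 ≤ p.2) ∧ p.1 + ∑ i, p.2 i ≤ t} with hS
    have hSm : MeasurableSet S :=
      ((measurableSet_le measurable_const measurable_fst).inter
        (measurableSet_le measurable_const measurable_snd)).inter
        (measurableSet_le (f := fun p : ℝ × (Fin n → ℝ) => p.1 + ∑ i, p.2 i) (by fun_prop)
          measurable_const)
    have hpre : {x : Fin (n + 1) → ℝ | 0 ≤ x ∧ ∑ i, x i ≤ t} =
        MeasurableEquiv.piFinSuccAbove (fun _ => ℝ) 0 ⁻¹' S := by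
      ext x
      simp [hS, Pi.le_def, Fin.forall_fin_succ, Fin.sum_univ_succ, Fin.tail]
    have hslice (a : ℝ) : volume (Prod.mk a ⁻¹' S) =
        (Icc 0 t).indicator (fun a => ENNReal.ofReal ((t - a) ^ n / n !)) a := by
      by_cases ha : a ∈ Icc 0 t
      · rw [indicator_of_mem ha, ← ih (sub_nonneg.2 ha.2)]
        congr 1
        ext y
        simp [hS, ha.1, le_sub_iff_add_le']
      · have hempty : Prod.mk a ⁻¹' S = ∅ := by
          refine eq_empty_of_forall_notMem fun y hy => ha ⟨hy.1.1, ?_⟩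
          have hle : a + ∑ i, y i ≤ t := hy.2
          linarith [Finset.sum_nonneg fun i (_ : i ∈ Finset.univ) => hy.1.2 i]
        rw [hempty, measure_empty, indicator_of_notMem ha]
    rw [hpre, (volume_preserving_piFinSuccAbove (fun _ => ℝ) 0).measure_preimage
      hSm.nullMeasurableSet, Measure.volume_eq_prod, Measure.prod_apply hSm,
      lintegral_congr hslice, lintegral_indicator measurableSet_Icc,
      lintegral_Icc_sub_pow_div_factorial n ht]

lemma convexHull_insert_zero_range_single (n : ℕ) :
    convexHull ℝ (insert 0 (range fun i : Fin n => Pi.single i (1 : ℝ))) =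
      {x : Fin n → ℝ | 0 ≤ x ∧ ∑ i, x i ≤ 1} := by
  refine subset_antisymm (convexHull_min ?_ ?_) fun x hx => ?_
  · rintro _ (rfl | ⟨i, rfl⟩)
    · simp
    · simp [Pi.single_nonneg]
  · exact (convex_Ici 0).inter
      (convex_halfSpace_le (f := fun x : Fin n → ℝ => ∑ i, x i)
        ⟨fun x y => Finset.sum_add_distrib, fun c x => (Finset.mul_sum _ _ _).symm⟩ 1)
  · refine mem_convexHull_of_exists_fintype (ι := Option (Fin n))
      (fun o => o.elim (1 - ∑ i, x i) x) (fun o => o.elim 0 fun i => Pi.single i 1) ?_ ?_ ?_ ?_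
    · rintro (_ | i)
      · exact sub_nonneg.2 hx.2
      · exact hx.1 i
    · simp [Fintype.sum_option]
    · rintro (_ | i) <;> simp
    · ext j
      simp [Fintype.sum_option, Finset.sum_apply, Pi.single_apply]

open scoped Nat in
lemma volume_convexHull_insert_zero_range {n : ℕ} (v : Fin n → Fin n → ℝ) :
    volume (convexHull ℝ (insert 0 (range v))) = ENNReal.ofReal (|Matrix.det v| / n !) := by
  have himage : insert 0 (range v) =
      Matrix.toLin' (Matrix.of v)ᵀ '' insert 0 (range fun i : Fin n => Pi.single i (1 : ℝ)) := by
    rw [image_insert_eq, map_zero, ← range_comp]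
    congr 2
    ext i j
    simp
  rw [himage, ← LinearMap.image_convexHull, convexHull_insert_zero_range_single,
    Measure.addHaar_image_linearMap, LinearMap.det_toLin', Matrix.det_transpose,
    volume_setOf_nonneg_sum_le n zero_le_one, one_pow, ← ENNReal.ofReal_mul (abs_nonneg _),
    mul_one_div]
  rfl

lemma tripleProduct_eq_det (u v w : E3) :
    tripleProduct u v w = Matrix.det ![u.ofLp, v.ofLp, w.ofLp] := by
  rw [← triple_product_eq_det, tripleProduct, cross, EuclideanSpace.inner_eq_star_dotProduct,
    dotProduct_comm]
  rfl

lemma volume_real_convexHull_zero (u v w : E3) :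
    volume.real (convexHull ℝ {0, u, v, w}) = |tripleProduct u v w| / 6 := by
  set e := WithLp.linearEquiv 2 ℝ (Fin 3 → ℝ)
  set V : Set (Fin 3 → ℝ) := insert 0 (range ![u.ofLp, v.ofLp, w.ofLp]) with hV
  have hvert : ({0, u, v, w} : Set E3) = e.symm '' V := by
    rw [hV, image_insert_eq, ← range_comp]
    ext x
    simp [e, Fin.exists_fin_succ, eq_comm]
  have hhull : convexHull ℝ {0, u, v, w} = WithLp.ofLp ⁻¹' convexHull ℝ V := by
    rw [hvert, ← LinearEquiv.coe_coe, ← LinearMap.image_convexHull (f := e.symm.toLinearMap)]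
    exact e.toEquiv.image_symm_eq_preimage _
  have hmeas : MeasurableSet (convexHull ℝ V) :=
    (((finite_range _).insert 0).isCompact_convexHull (𝕜 := ℝ)).measurableSet
  rw [hhull, measureReal_def,
    (PiLp.volume_preserving_ofLp (Fin 3)).measure_preimage hmeas.nullMeasurableSet,
    volume_convexHull_insert_zero_range, ENNReal.toReal_ofReal (by positivity),
    tripleProduct_eq_det]
  norm_num [Nat.factorial]

lemma inner_cross_left (u v : E3) : ⟪cross u v, u⟫ = 0 := by
  simp only [inner_eq_sum_three, cross_apply_zero, cross_apply_one, cross_apply_two]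
  ring

lemma inner_cross_right (u v : E3) : ⟪cross u v, v⟫ = 0 := by
  simp only [inner_eq_sum_three, cross_apply_zero, cross_apply_one, cross_apply_two]
  ring

lemma inner_cross_nonneg_of_mem_convexHull {u v w x : E3} (hD : 0 ≤ tripleProduct u v w)
    (hx : x ∈ convexHull ℝ {0, u, v, w}) : 0 ≤ ⟪cross v w, x⟫ := by
  refine convexHull_min (t := {y | 0 ≤ ⟪cross v w, y⟫}) ?_
    (convex_halfSpace_ge (innerₛₗ ℝ (cross v w)).isLinear 0) hx
  rintro y (rfl | rfl | rfl | rfl)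
  · exact (inner_zero_right (𝕜 := ℝ) _).ge
  · exact hD.trans_eq (real_inner_comm _ _)
  · exact (inner_cross_left _ _).ge
  · exact (inner_cross_right _ _).ge

lemma ae_mem_halfSpace_cross_of_mem_convexHull {u v w : E3} (hD : 0 < tripleProduct u v w) :
    ∀ᵐ x ∂solidAngle, x ∈ convexHull ℝ {0, u, v, w} → x ∈ halfSpace (cross v w) := by
  filter_upwards [ae_solidAngle_inner_ne_zero (cross_ne_zero_of_tripleProduct_ne_zero hD.ne')]
    with x hne hx
  exact (inner_cross_nonneg_of_mem_convexHull hD.le hx).lt_of_ne' hne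

lemma convexHull_ae_le_trihedralCone {u v w : E3} (hD : 0 < tripleProduct u v w) :
    (convexHull ℝ {0, u, v, w} : Set E3) ≤ᵐ[solidAngle] trihedralCone u v w := by
  have hrot (a b c : E3) : ({0, b, c, a} : Set E3) = {0, a, b, c} := by
    rw [pair_comm c a, insert_comm b a]
  have hu := ae_mem_halfSpace_cross_of_mem_convexHull hD
  have hv := ae_mem_halfSpace_cross_of_mem_convexHull (u := v) (v := w) (w := u)
    (by rwa [tripleProduct_rotate])
  have hw := ae_mem_halfSpace_cross_of_mem_convexHull (u := w) (v := u) (w := v)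
    (by rwa [← tripleProduct_rotate])
  rw [hrot] at hv
  rw [← hrot] at hw
  filter_upwards [hu, hv, hw] with x hxu hxv hxw hx
  exact ⟨⟨hxu hx, hxv hx⟩, hxw hx⟩

lemma solidAngle_real_convexHull_le_of_pos {u v w : E3} (hD : 0 < tripleProduct u v w)
    (hA : 0 < solidAngleDenom u v w) :
    solidAngle.real (convexHull ℝ {0, u, v, w}) ≤
      2 * arctan (tripleProduct u v w / solidAngleDenom u v w) :=
  calc solidAngle.real (convexHull ℝ {0, u, v, w})
      ≤ solidAngle.real (trihedralCone u v w) :=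
        ENNReal.toReal_mono (measure_ne_top _ _)
          (measure_mono_ae (convexHull_ae_le_trihedralCone hD))
    _ = 2 * arctan (tripleProduct u v w / solidAngleDenom u v w) := by
        rw [solidAngle_real_trihedralCone hD, arg_eq_arctan hA]

lemma solidAngleDenom_swap (u v w : E3) : solidAngleDenom u w v = solidAngleDenom u v w := by
  simp only [solidAngleDenom, real_inner_comm w v, real_inner_comm u w, real_inner_comm v u]
  ring

lemma solidAngle_real_convexHull_le {u v w : E3} (hA : 0 < solidAngleDenom u v w) :
    solidAngle.real (convexHull ℝ {0, u, v, w}) ≤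
      2 * arctan (|tripleProduct u v w| / solidAngleDenom u v w) := by
  rcases lt_trichotomy (tripleProduct u v w) 0 with hneg | hzero | hpos
  · have hpos : 0 < tripleProduct u w v := by rw [tripleProduct_swap]; exact neg_pos.2 hneg
    rw [abs_of_neg hneg, ← tripleProduct_swap, ← solidAngleDenom_swap, pair_comm v w]
    exact solidAngle_real_convexHull_le_of_pos hpos (by rwa [solidAngleDenom_swap])
  · have hfinite : volume (convexHull ℝ {0, u, v, w}) ≠ ∞ :=
      (isBounded_convexHull.2 (toFinite {0, u, v, w}).isBounded).measure_lt_top.ne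
    have hnull := measureReal_mono (s₁ := convexHull ℝ {0, u, v, w} ∩ closedBall 0 1)
      inter_subset_left hfinite
    rw [volume_real_convexHull_zero, hzero, abs_zero, zero_div] at hnull
    rw [hzero, abs_zero, zero_div, arctan_zero, solidAngle_real_apply]
    linarith
  · rw [abs_of_pos hpos]
    exact solidAngle_real_convexHull_le_of_pos hpos hA

open scoped Pointwise in
lemma convexHull_eq_vadd {E : Type*} [AddCommGroup E] [Module ℝ E] (o p q r : E) :
    convexHull ℝ {o, p, q, r} = o +ᵥ convexHull ℝ {0, p - o, q - o, r - o} := by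
  rw [← convexHull_vadd]
  simp [← image_vadd, image_insert_eq]

lemma volume_real_convexHull (o p q r : E3) :
    volume.real (convexHull ℝ {o, p, q, r}) = |tripleProduct (p - o) (q - o) (r - o)| / 6 := by
  rw [convexHull_eq_vadd, measureReal_def, measure_vadd, ← measureReal_def,
    volume_real_convexHull_zero]

open scoped Pointwise in
lemma volume_real_convexHull_inter_closedBall_le {o p q r : E3}
    (hA : 0 < solidAngleDenom (p - o) (q - o) (r - o)) :
    volume.real (convexHull ℝ {o, p, q, r} ∩ closedBall o 1) ≤ 2 / 3 *
      arctan (|tripleProduct (p - o) (q - o) (r - o)| /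
        solidAngleDenom (p - o) (q - o) (r - o)) := by
  have hball : closedBall o 1 = o +ᵥ closedBall (0 : E3) 1 := by
    rw [vadd_closedBall, vadd_eq_add, add_zero]
  rw [convexHull_eq_vadd, hball, ← vadd_set_inter, measureReal_def, measure_vadd,
    ← measureReal_def]
  linarith [solidAngle_real_convexHull_le hA,
    solidAngle_real_apply (convexHull ℝ {0, p - o, q - o, r - o})]

/-! ### Hadamard's inequality for tetrahedra -/

lemma abs_tripleProduct_le (u v w : E3) : |tripleProduct u v w| ≤ ‖u‖ * ‖v‖ * ‖w‖ := by
  have hcross : ‖cross v w‖ ≤ ‖v‖ * ‖w‖ := by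
    rw [cross, norm_ofLp_crossProduct]
    exact mul_le_of_le_one_right (by positivity) (sin_le_one _)
  calc |tripleProduct u v w| ≤ ‖u‖ * ‖cross v w‖ := abs_real_inner_le_norm _ _
    _ ≤ ‖u‖ * (‖v‖ * ‖w‖) := by gcongr
    _ = ‖u‖ * ‖v‖ * ‖w‖ := (mul_assoc _ _ _).symm

lemma twenty_seven_mul_le_add_pow_three {x y z : ℝ} (hx : 0 ≤ x) (hy : 0 ≤ y) (hz : 0 ≤ z) :
    27 * (x * y * z) ≤ (x + y + z) ^ 3 := by
  nlinarith [mul_nonneg hx (sq_nonneg (y - z)), mul_nonneg hy (sq_nonneg (z - x)),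
    mul_nonneg hz (sq_nonneg (x - y)), mul_nonneg (add_nonneg (add_nonneg hx hy) hz)
      (add_nonneg (add_nonneg (sq_nonneg (x - y)) (sq_nonneg (y - z))) (sq_nonneg (z - x)))]

-- The vectors `u + v - w`, `u - v + w`, `-u + v + w` are the edges of the parallelepiped
-- circumscribed about the tetrahedron: its face diagonals are the edges of the tetrahedron.
lemma tripleProduct_sq_le (u v w : E3) :
    432 * tripleProduct u v w ^ 2 ≤
      (‖u‖ ^ 2 + ‖v‖ ^ 2 + ‖w‖ ^ 2 + ‖v - w‖ ^ 2 + ‖w - u‖ ^ 2 + ‖u - v‖ ^ 2) ^ 3 := by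
  set a := u + v - w with ha
  set b := u - v + w with hb
  set c := -u + v + w with hc
  have hvol : tripleProduct a b c = -4 * tripleProduct u v w := by
    simp only [ha, hb, hc, tripleProduct, inner_eq_sum_three, cross_apply_zero, cross_apply_one,
      cross_apply_two, PiLp.add_apply, PiLp.sub_apply, PiLp.neg_apply]
    ring
  have hsum : ‖u‖ ^ 2 + ‖v‖ ^ 2 + ‖w‖ ^ 2 + ‖v - w‖ ^ 2 + ‖w - u‖ ^ 2 + ‖u - v‖ ^ 2 =
      ‖a‖ ^ 2 + ‖b‖ ^ 2 + ‖c‖ ^ 2 := by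
    simp only [ha, hb, hc, ← real_inner_self_eq_norm_sq, inner_eq_sum_three, PiLp.add_apply,
      PiLp.sub_apply, PiLp.neg_apply]
    ring
  calc 432 * tripleProduct u v w ^ 2 = 27 * |tripleProduct a b c| ^ 2 := by
        rw [sq_abs, hvol]; ring
    _ ≤ 27 * (‖a‖ * ‖b‖ * ‖c‖) ^ 2 := by
        gcongr
        exact abs_tripleProduct_le a b c
    _ = 27 * (‖a‖ ^ 2 * ‖b‖ ^ 2 * ‖c‖ ^ 2) := by ring
    _ ≤ (‖a‖ ^ 2 + ‖b‖ ^ 2 + ‖c‖ ^ 2) ^ 3 :=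
        twenty_seven_mul_le_add_pow_three (sq_nonneg _) (sq_nonneg _) (sq_nonneg _)
    _ = _ := by rw [hsum]

-- The tangent bound `1 - t ^ (-3 / 2) ≤ 3 / 2 * (t - 1)` at `D = √32 * t ^ (3 / 2)`, cleared of
-- fractional powers by squaring.
lemma sub_four_mul_sqrt_two_le {D t : ℝ} (ht0 : 0 ≤ t) (ht : t ≤ 5 / 3)
    (h : D ^ 2 ≤ 32 * t ^ 3) : D - 4 * √2 ≤ 3 / 2 * (t - 1) * D := by
  have hcubic : 0 ≤ 4 + 8 * t + 12 * t ^ 2 - 9 * t ^ 3 := by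
    nlinarith [mul_nonneg (sq_nonneg t) (sub_nonneg.2 ht), mul_nonneg ht0 (sub_nonneg.2 ht)]
  have hsq : (D * (5 - 3 * t) / 2) ^ 2 ≤ (4 * √2) ^ 2 :=
    calc (D * (5 - 3 * t) / 2) ^ 2 = D ^ 2 * (5 - 3 * t) ^ 2 / 4 := by ring
      _ ≤ 32 * t ^ 3 * (5 - 3 * t) ^ 2 / 4 := by gcongr
      _ = 32 - 8 * ((t - 1) ^ 2 * (4 + 8 * t + 12 * t ^ 2 - 9 * t ^ 3)) := by ring
      _ ≤ 32 := sub_le_self _ (by positivity)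
      _ = (4 * √2) ^ 2 := by rw [mul_pow, sq_sqrt zero_le_two]; norm_num
  linarith [(abs_le_of_sq_le_sq' hsq (by positivity)).2]

/-! ### Arctangents and the octahedral density -/

lemma arctan_le_tangent {s t : ℝ} (hs : 0 ≤ s) (ht : 0 ≤ t) :
    arctan t ≤ arctan s + (t - s) / (1 + s ^ 2) := by
  have hdiff (D : Set ℝ) : DifferentiableOn ℝ arctan D := differentiable_arctan.differentiableOn
  rcases le_total s t with hst | hts
  · have := (convex_Ici s).image_sub_le_mul_sub_of_deriv_le continuous_arctan.continuousOn
      (hdiff _) (C := 1 / (1 + s ^ 2)) (fun x hx => by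
        rw [interior_Ici] at hx
        simp only [Real.deriv_arctan]
        have hsx : s ≤ x := le_of_lt hx
        gcongr) s self_mem_Ici t hst hst
    rw [one_div_mul_eq_div] at this
    linarith
  · have := (convex_Icc 0 s).mul_sub_le_image_sub_of_le_deriv continuous_arctan.continuousOn
      (hdiff _) (C := 1 / (1 + s ^ 2)) (fun x hx => by
        rw [interior_Icc] at hx
        simp only [Real.deriv_arctan]
        have h0 : 0 ≤ x := hx.1.le
        have hxs : x ≤ s := hx.2.le
        gcongr) t ⟨ht, hts⟩ s ⟨hs, le_rfl⟩ hts
    rw [one_div_mul_eq_div, ← neg_sub t s, neg_div] at this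
    linarith

lemma arccos_one_div_sqrt_three : arccos (1 / √3) = arctan √2 := by
  rw [arccos_eq_arctan (by positivity), one_div, inv_pow, sq_sqrt zero_le_three, div_inv_eq_mul,
    ← sqrt_mul (by norm_num)]
  norm_num

lemma arctan_sqrt_two : arctan √2 = π / 4 + arctan (3 - 2 * √2) := by
  have h : √2 ^ 2 = 2 := sq_sqrt zero_le_two
  have hgt : 1 < √2 := one_lt_sqrt_two
  rw [← arctan_one, arctan_add (by linarith)]
  congr 1
  rw [eq_div_iff (by linarith)]
  linear_combination 2 * h

lemma δoct_eq : δoct = 3 * √2 * arctan (3 - 2 * √2) := by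
  have h8 : √8 = 2 * √2 := by
    rw [show (8 : ℝ) = 2 ^ 2 * 2 by norm_num, sqrt_mul (by norm_num), sqrt_sq zero_le_two]
  rw [δoct, arccos_one_div_sqrt_three, arctan_sqrt_two, h8, div_eq_iff (by positivity)]
  linear_combination -6 * arctan (3 - 2 * √2) * sq_sqrt (zero_le_two (α := ℝ))

lemma sqrt_two_div_two_le_δoct : √2 / 2 ≤ δoct := by
  have h : √2 ^ 2 = 2 := sq_sqrt zero_le_two
  have hx : 0 ≤ 3 - 2 * √2 := by nlinarith [sqrt_nonneg 2]
  have htan := arctan_le_tangent hx le_rfl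
  have hslope : (0 - (3 - 2 * √2)) / (1 + (3 - 2 * √2) ^ 2) = -(1 / 6) := by
    rw [div_eq_iff (by positivity)]
    linear_combination 2 / 3 * h
  rw [arctan_zero, hslope] at htan
  rw [δoct_eq]
  nlinarith [sqrt_nonneg 2]

lemma δoct_le : δoct ≤ 20 / 27 := by
  have h : √2 ^ 2 = 2 := sq_sqrt zero_le_two
  have hlt : √2 < 1.415 := (sqrt_lt' (by norm_num)).2 (by norm_num)
  have htan := arctan_le_tangent (le_refl 0) (by linarith : 0 ≤ 3 - 2 * √2)
  rw [arctan_zero, zero_add, sub_zero, zero_pow two_ne_zero, add_zero, div_one] at htan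
  rw [δoct_eq]
  nlinarith [sqrt_nonneg 2]

lemma three_mul_arccos_one_third_sub_pi : 3 * arccos (1 / 3) - π = 2 * arctan (√2 / 5) := by
  have h : √2 ^ 2 = 2 := sq_sqrt zero_le_two
  have hθ : arccos (1 / 3) = arctan (2 * √2) := by
    rw [arccos_eq_arctan (by norm_num), show 1 - (1 / 3 : ℝ) ^ 2 = (2 / 3) ^ 2 * 2 by norm_num,
      sqrt_mul (by positivity), sqrt_sq (by positivity)]
    congr 1
    ring
  have hdouble : 2 * arctan √2 = π - arctan (2 * √2) := by
    have hneg : 2 * √2 / (1 - √2 ^ 2) = -(2 * √2) := by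
      rw [h, div_eq_iff (by norm_num)]
      ring
    rw [two_mul_arctan_add_pi one_lt_sqrt_two, hneg, arctan_neg]
    ring
  have hadd : arctan √2 + arctan (√2 / 5) = arctan (2 * √2) := by
    rw [arctan_add (by linarith)]
    congr 1
    rw [div_eq_iff (by linarith)]
    linear_combination 2 / 5 * √2 * h
  linarith

/-! ### Quasi-regular tetrahedra -/

/-- The quasi-regular tetrahedra: all six edges have length in `[2, 2.51]`. -/
structure IsQuasiRegular (o p q r : E3) : Prop where
  dist_op : dist o p ∈ Icc 2 2.51
  dist_oq : dist o q ∈ Icc 2 2.51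
  dist_or : dist o r ∈ Icc 2 2.51
  dist_pq : dist p q ∈ Icc 2 2.51
  dist_qr : dist q r ∈ Icc 2 2.51
  dist_rp : dist r p ∈ Icc 2 2.51

/-- The excess of the total length of the edges `op`, `oq`, `or` over its value for the regular
tetrahedron of edge length `2`. -/
def apexExcess (o p q r : E3) : ℝ := dist o p + dist o q + dist o r - 6

/-- The excess of the perimeter of the triangle `pqr` over its value for the equilateral triangle
of edge length `2`. -/
def baseExcess (p q r : E3) : ℝ := dist p q + dist q r + dist r p - 6

lemma solidAngleDenom_sub (o p q r : E3) :
    solidAngleDenom (p - o) (q - o) (r - o) = dist o p * dist o q * dist o r +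
      (dist o p * (dist o q ^ 2 + dist o r ^ 2 - dist q r ^ 2) +
        dist o q * (dist o r ^ 2 + dist o p ^ 2 - dist r p ^ 2) +
        dist o r * (dist o p ^ 2 + dist o q ^ 2 - dist p q ^ 2)) / 2 := by
  have hinner (x y : E3) :
      ⟪x - o, y - o⟫ = (dist o x ^ 2 + dist o y ^ 2 - dist x y ^ 2) / 2 := by
    rw [real_inner_eq_norm_mul_self_add_norm_mul_self_sub_norm_sub_mul_self_div_two,
      sub_sub_sub_cancel_right, ← dist_eq_norm, ← dist_eq_norm, ← dist_eq_norm, dist_comm x o,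
      dist_comm y o]
    ring
  simp only [solidAngleDenom, hinner, ← dist_eq_norm, dist_comm _ o]
  ring

namespace IsQuasiRegular

variable {o p q r : E3}

lemma rotate (h : IsQuasiRegular o p q r) : IsQuasiRegular p q r o :=
  ⟨h.dist_pq, by rw [dist_comm]; exact h.dist_rp, by rw [dist_comm]; exact h.dist_op,
    h.dist_qr, by rw [dist_comm]; exact h.dist_or, h.dist_oq⟩

lemma apexExcess_mem (h : IsQuasiRegular o p q r) : apexExcess o p q r ∈ Icc 0 1.53 := by
  obtain ⟨⟨hp, hp'⟩, ⟨hq, hq'⟩, ⟨hr, hr'⟩, -, -, -⟩ := h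
  constructor <;> rw [apexExcess] <;> linarith

lemma baseExcess_mem (h : IsQuasiRegular o p q r) : baseExcess p q r ∈ Icc 0 1.53 := by
  obtain ⟨-, -, -, ⟨hp, hp'⟩, ⟨hq, hq'⟩, ⟨hr, hr'⟩⟩ := h
  constructor <;> rw [baseExcess] <;> linarith

lemma le_solidAngleDenom (h : IsQuasiRegular o p q r) :
    20 + 14 * apexExcess o p q r + 2 * apexExcess o p q r ^ 2 - 4.51 * baseExcess p q r -
        2.255 * apexExcess o p q r * baseExcess p q r ≤
      solidAngleDenom (p - o) (q - o) (r - o) := by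
  rw [solidAngleDenom_sub, apexExcess, baseExcess]
  obtain ⟨⟨hp, -⟩, ⟨hq, -⟩, ⟨hr, -⟩, ⟨hpq, hpq'⟩, ⟨hqr, hqr'⟩, ⟨hrp, hrp'⟩⟩ := h
  obtain ⟨a, ha, hpa⟩ := exists_nonneg_add_of_le hp
  obtain ⟨b, hb, hqb⟩ := exists_nonneg_add_of_le hq
  obtain ⟨c, hc, hrc⟩ := exists_nonneg_add_of_le hr
  obtain ⟨d, hd, hqrd⟩ := exists_nonneg_add_of_le hqr
  obtain ⟨e, he, hrpe⟩ := exists_nonneg_add_of_le hrp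
  obtain ⟨f, hf, hpqf⟩ := exists_nonneg_add_of_le hpq
  rw [← hpa, ← hqb, ← hrc, ← hqrd, ← hrpe, ← hpqf]
  -- the squares of the edges of the base are replaced by their secants on `[2, 2.51]`
  have hsecant {x y : ℝ} (hx : 0 ≤ x) (hy : 0 ≤ y) (hy' : 2 + y ≤ 2.51) :
      0 ≤ (2 + x) * (y * (0.51 - y)) :=
    mul_nonneg (by positivity) (mul_nonneg hy (by linarith))
  have hmixed : 0 ≤ 2 * (a * b + b * c + c * a) + a * b * c + (a * (b ^ 2 + c ^ 2) +
      b * (c ^ 2 + a ^ 2) + c * (a ^ 2 + b ^ 2)) / 2 +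
      2.255 * (a * (e + f) + b * (f + d) + c * (d + e)) := by positivity
  linarith [hsecant ha hd (hqrd.trans_le hqr'), hsecant hb he (hrpe.trans_le hrp'),
    hsecant hc hf (hpqf.trans_le hpq')]

end IsQuasiRegular

lemma one_div_le_of_quadratic_le {u w A : ℝ} (hu : u ∈ Icc 0 1.53) (hw : w ∈ Icc 0 1.53)
    (hA : 20 + 14 * u + 2 * u ^ 2 - 4.51 * w - 2.255 * u * w ≤ A) :
    1 / A ≤ 1 / 20 - 0.0185 * u + 0.017215 * w := by
  obtain ⟨hu0, hu1⟩ := hu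
  obtain ⟨hw0, hw1⟩ := hw
  have hA0 : 0 < A := by linarith [mul_nonneg hu0 (sub_nonneg.2 hw1), sq_nonneg u]
  have hw_coeff : 0 ≤ w * (0.1188 - 0.07763965 * w) := mul_nonneg hw0 (by linarith)
  have hu_coeff : 0 ≤ u * (0.33 - 0.159 * u - 0.037 * u ^ 2) := mul_nonneg hu0 (by nlinarith)
  have huw_coeff : 0 ≤ u * w * (0.211695 + 0.0761475 * u - 0.038819825 * w) :=
    mul_nonneg (mul_nonneg hu0 hw0) (by linarith)
  rw [div_le_iff₀ hA0]
  calc 1 ≤ (1 / 20 - 0.0185 * u + 0.017215 * w) *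
        (20 + 14 * u + 2 * u ^ 2 - 4.51 * w - 2.255 * u * w) := by linarith
    _ ≤ _ := mul_le_mul_of_nonneg_left hA (by linarith)

namespace IsQuasiRegular

variable {o p q r : E3}

lemma solidAngleDenom_pos (h : IsQuasiRegular o p q r) :
    0 < solidAngleDenom (p - o) (q - o) (r - o) := by
  have hu := h.apexExcess_mem.1
  have hw := h.baseExcess_mem.2
  linarith [h.le_solidAngleDenom, mul_nonneg hu (sub_nonneg.2 hw),
    sq_nonneg (apexExcess o p q r)]

lemma volume_real_inter_closedBall_le (h : IsQuasiRegular o p q r) :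
    volume.real (convexHull ℝ {o, p, q, r} ∩ closedBall o 1) ≤
      2 / 3 * (arctan (√2 / 5) + 25 / 27 * (|tripleProduct (p - o) (q - o) (r - o)| *
        (1 / 20 - 0.0185 * apexExcess o p q r + 0.017215 * baseExcess p q r) - √2 / 5)) := by
  set D := |tripleProduct (p - o) (q - o) (r - o)|
  set A := solidAngleDenom (p - o) (q - o) (r - o)
  have hslope : 1 + (√2 / 5) ^ 2 = 27 / 25 := by
    rw [div_pow, sq_sqrt zero_le_two]
    norm_num
  calc volume.real (convexHull ℝ {o, p, q, r} ∩ closedBall o 1) ≤ 2 / 3 * arctan (D / A) :=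
        volume_real_convexHull_inter_closedBall_le h.solidAngleDenom_pos
    _ ≤ 2 / 3 * (arctan (√2 / 5) + (D / A - √2 / 5) / (1 + (√2 / 5) ^ 2)) := by
        gcongr
        exact arctan_le_tangent (by positivity)
          (div_nonneg (abs_nonneg _) h.solidAngleDenom_pos.le)
    _ = 2 / 3 * (arctan (√2 / 5) + 25 / 27 * (D * (1 / A) - √2 / 5)) := by
        rw [hslope]
        ring
    _ ≤ _ := by
        gcongr
        exact one_div_le_of_quadratic_le h.apexExcess_mem h.baseExcess_mem h.le_solidAngleDenom

-- The secant bound `y ^ 2 ≤ 4.51 * y - 5.02` on `[2, 2.51]` makes the sum of the squares of the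
-- edges linear in their excess.
lemma abs_tripleProduct_sub_le (h : IsQuasiRegular o p q r) :
    |tripleProduct (p - o) (q - o) (r - o)| - 4 * √2 ≤ 0.281875 *
      (apexExcess o p q r + baseExcess p q r) * |tripleProduct (p - o) (q - o) (r - o)| := by
  set D := |tripleProduct (p - o) (q - o) (r - o)| with hD
  set s := apexExcess o p q r + baseExcess p q r with hs
  obtain ⟨hu0, hu1⟩ := h.apexExcess_mem
  obtain ⟨hw0, hw1⟩ := h.baseExcess_mem
  have hedges := tripleProduct_sq_le (p - o) (q - o) (r - o)
  simp only [sub_sub_sub_cancel_right, ← dist_eq_norm, dist_comm _ o,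
    ← sq_abs (tripleProduct _ _ _), ← hD] at hedges
  have hsecant {y : ℝ} (hy : y ∈ Icc 2 2.51) : y ^ 2 ≤ 4.51 * y - 5.02 := by
    nlinarith [mul_nonneg (sub_nonneg.2 hy.1) (sub_nonneg.2 hy.2)]
  have hQ : dist o p ^ 2 + dist o q ^ 2 + dist o r ^ 2 + dist q r ^ 2 + dist r p ^ 2 +
      dist p q ^ 2 ≤ 24 + 4.51 * s := by
    rw [hs, apexExcess, baseExcess]
    linarith [hsecant h.dist_op, hsecant h.dist_oq, hsecant h.dist_or, hsecant h.dist_pq,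
      hsecant h.dist_qr, hsecant h.dist_rp]
  have hDt : D ^ 2 ≤ 32 * (1 + 4.51 / 24 * s) ^ 3 := by
    have := hedges.trans (pow_le_pow_left₀ (by positivity) hQ 3)
    linarith
  have := sub_four_mul_sqrt_two_le (by linarith) (by linarith) hDt
  linarith

end IsQuasiRegular

lemma tripleProduct_sub_rotate (o p q r : E3) :
    tripleProduct (q - p) (r - p) (o - p) = -tripleProduct (p - o) (q - o) (r - o) := by
  simp only [tripleProduct, inner_eq_sum_three, cross_apply_zero, cross_apply_one, cross_apply_two,
    PiLp.sub_apply]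
  ring

lemma insert_rotate {α : Type*} (a b c d : α) : ({b, c, d, a} : Set α) = {a, b, c, d} := by
  rw [pair_comm d a, insert_comm c a, insert_comm b a]

lemma measureReal_inter_union_four_le {α : Type*} [MeasurableSpace α] {μ : Measure α}
    (S s t u v : Set α) : μ.real (S ∩ (s ∪ t ∪ u ∪ v)) ≤
      μ.real (S ∩ s) + μ.real (S ∩ t) + μ.real (S ∩ u) + μ.real (S ∩ v) := by
  simp only [inter_union_distrib_left]
  refine (measureReal_union_le _ _).trans (add_le_add_left ?_ _)
  exact (measureReal_union_le _ _).trans (add_le_add_left (measureReal_union_le _ _) _)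

lemma IsQuasiRegular.volume_real_inter_union_closedBall_le {o p q r : E3}
    (h : IsQuasiRegular o p q r) :
    volume.real (convexHull ℝ {o, p, q, r} ∩
        (closedBall o 1 ∪ closedBall p 1 ∪ closedBall q 1 ∪ closedBall r 1)) ≤
      2 / 3 * (4 * arctan (√2 / 5) + 25 / 27 * (|tripleProduct (p - o) (q - o) (r - o)| *
        (1 / 5 - 0.00257 * (apexExcess o p q r + baseExcess p q r)) - 4 * √2 / 5)) := by
  have ho := h.volume_real_inter_closedBall_le
  have hp := h.rotate.volume_real_inter_closedBall_le
  have hq := h.rotate.rotate.volume_real_inter_closedBall_le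
  have hr := h.rotate.rotate.rotate.volume_real_inter_closedBall_le
  simp only [tripleProduct_sub_rotate o p q r, tripleProduct_sub_rotate p q r o,
    tripleProduct_sub_rotate q r o p, abs_neg, insert_rotate o p q r, insert_rotate p q r o,
    insert_rotate q r o p] at ho hp hq hr
  set D := |tripleProduct (p - o) (q - o) (r - o)|
  have hweights :
      (1 / 20 - 0.0185 * apexExcess o p q r + 0.017215 * baseExcess p q r) +
        (1 / 20 - 0.0185 * apexExcess p q r o + 0.017215 * baseExcess q r o) +
        (1 / 20 - 0.0185 * apexExcess q r o p + 0.017215 * baseExcess r o p) +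
        (1 / 20 - 0.0185 * apexExcess r o p q + 0.017215 * baseExcess o p q) =
      1 / 5 - 0.00257 * (apexExcess o p q r + baseExcess p q r) := by
    simp only [apexExcess, baseExcess, dist_comm p o, dist_comm q o, dist_comm r o, dist_comm q p,
      dist_comm r p, dist_comm r q]
    ring
  rw [← hweights]
  linarith [measureReal_inter_union_four_le (μ := volume) (convexHull ℝ {o, p, q, r})
    (closedBall o 1) (closedBall p 1) (closedBall q 1) (closedBall r 1)]

lemma IsQuasiRegular.deficit_le {o p q r : E3} (h : IsQuasiRegular o p q r) :
    (1 / 5 - 27 / 100 * δoct) * (|tripleProduct (p - o) (q - o) (r - o)| - 4 * √2) ≤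
      0.00257 * (apexExcess o p q r + baseExcess p q r) *
        |tripleProduct (p - o) (q - o) (r - o)| := by
  set D := |tripleProduct (p - o) (q - o) (r - o)|
  set s := apexExcess o p q r + baseExcess p q r
  have hs : 0 ≤ s := add_nonneg h.apexExcess_mem.1 h.baseExcess_mem.1
  have hsqrt : 1.414 < √2 := lt_sqrt_of_sq_lt (by norm_num)
  have hcoeff : 0 ≤ 1 / 5 - 27 / 100 * δoct := by linarith [δoct_le]
  calc (1 / 5 - 27 / 100 * δoct) * (D - 4 * √2)
      ≤ (1 / 5 - 27 / 100 * δoct) * (0.281875 * s * D) := by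
        gcongr
        exact h.abs_tripleProduct_sub_le
    _ = (1 / 5 - 27 / 100 * δoct) * 0.281875 * s * D := by ring
    _ ≤ 0.00257 * s * D := by
        gcongr
        linarith [sqrt_two_div_two_le_δoct]

theorem quasi_regular_tetrahedron_score_le_one_pt_general {p₀ p₁ p₂ p₃ : E3}
    (h : IsQuasiRegular p₀ p₁ p₂ p₃) :
    Gamma p₀ p₁ p₂ p₃ ≤ 4 / 3 * (3 * arccos (1 / 3) - π) - δoct * (2 * √2 / 3) := by
  set D := |tripleProduct (p₁ - p₀) (p₂ - p₀) (p₃ - p₀)|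
  set s := apexExcess p₀ p₁ p₂ p₃ + baseExcess p₁ p₂ p₃
  have hballs := h.volume_real_inter_union_closedBall_le
  have hvol : volume.real (convexHull ℝ {p₀, p₁, p₂, p₃}) = D / 6 := volume_real_convexHull ..
  have hdeficit : (1 / 5 - 27 / 100 * δoct) * (D - 4 * √2) ≤ 0.00257 * s * D := h.deficit_le
  rw [_root_.Gamma, ← measureReal_def, ← measureReal_def, hvol, three_mul_arccos_one_third_sub_pi]
  linarith

/-- A quasi-regular tetrahedron (all six pairwise distances in `[2, 2.51]`) whose
circumradius is at most `1.41` has compression at most `1 pt`. -/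
theorem quasi_regular_tetrahedron_score_le_one_pt (p₀ p₁ p₂ p₃ : E3)
    (h01 : dist p₀ p₁ ∈ Set.Icc (2 : ℝ) 2.51) (h02 : dist p₀ p₂ ∈ Set.Icc (2 : ℝ) 2.51)
    (h03 : dist p₀ p₃ ∈ Set.Icc (2 : ℝ) 2.51) (h12 : dist p₁ p₂ ∈ Set.Icc (2 : ℝ) 2.51)
    (h13 : dist p₁ p₃ ∈ Set.Icc (2 : ℝ) 2.51) (h23 : dist p₂ p₃ ∈ Set.Icc (2 : ℝ) 2.51)
    (hrad : ∃ c : E3, ∃ r : ℝ, r ≤ 1.41 ∧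
      dist c p₀ = r ∧ dist c p₁ = r ∧ dist c p₂ = r ∧ dist c p₃ = r) :
    Gamma p₀ p₁ p₂ p₃ ≤ (4 / 3) * (3 * arccos (1 / 3) - π) - δoct * (2 * Real.sqrt 2 / 3) := by
  exact quasi_regular_tetrahedron_score_le_one_pt_general
    ⟨h01, h02, h03, h12, h23, by rwa [dist_comm]⟩
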